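/- arXiv:2006.16565 — 2 statements merged into one kernel-verified Lean document; each statement's English description precedes it below -/
import Mathlib

section
/- There is an absolute constant C > 0 such that for every finite set P of N points in the hyperbolic plane ℍ² and every t > 0, the number of ordered pairs (p,q) ∈ P × P with d(p,q) = t is at most C · N^(4/3). -/
open scoped UpperHalfPlane MatrixGroups

noncomputable section

/-!
Of two points at distance `t`, the right one lies on the right half of the circle of radius `t`
around the left one. So it suffices to bound incidences between points and such semicircles. Two
of them meet at most once: if two circles of the same radius meet twice, the two centres and the two
intersection points form a rhombus, whose diagonals have the same midpoint, and that is impossible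
when both intersection points lie to the right of both centres.

Incidences with pseudosegments are bounded by Székely's argument. Join consecutive points on each
pseudosegment; the resulting graph has few crossings, so by the crossing lemma it has few edges. The
planar edge bound behind the crossing lemma needs no Euler formula, because the edges are
`x`-monotone: two consecutive edges leaving a vertex to the right are charged to a leftmost vertex
between them, and every vertex is charged at most twice.
-/

section RandomSubsets

open Finset

variable {α ι : Type*} [DecidableEq α]

/-- The probability that a random subset of `V`, containing each element independently with
probability `p`, equals `S`. -/
def bernoulliWeight (V : Finset α) (p : ℝ) (S : Finset α) : ℝ := p ^ #S * (1 - p) ^ #(V \ S)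

lemma bernoulliWeight_nonneg (V S : Finset α) {p : ℝ} (hp₀ : 0 ≤ p) (hp₁ : p ≤ 1) :
    0 ≤ bernoulliWeight V p S :=
  mul_nonneg (pow_nonneg hp₀ _) (pow_nonneg (sub_nonneg.2 hp₁) _)

lemma sum_bernoulliWeight_of_subset {V T : Finset α} (hT : T ⊆ V) (p : ℝ) :
    ∑ S ∈ V.powerset with T ⊆ S, bernoulliWeight V p S = p ^ #T := by
  have hprod : ∏ v ∈ V, (p + if v ∈ T then 0 else 1 - p) = p ^ #T := by
    rw [← prod_subset hT fun v _ hv => by simp [hv], ← prod_const]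
    exact prod_congr rfl fun v hv => by simp [hv]
  rw [← hprod, prod_add, sum_filter]
  refine sum_congr rfl fun S _ => ?_
  rw [prod_const]
  split_ifs with hTS
  · rw [bernoulliWeight, ← prod_const (s := V \ S)]
    congr 1
    exact prod_congr rfl fun v hv => (if_neg fun hvT => (mem_sdiff.1 hv).2 (hTS hvT)).symm
  · obtain ⟨v, hvT, hvS⟩ := not_subset.1 hTS
    have hzero : ∏ w ∈ V \ S, (if w ∈ T then 0 else 1 - p) = 0 :=
      prod_eq_zero (mem_sdiff.2 ⟨hT hvT, hvS⟩) (if_pos hvT)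
    rw [hzero, mul_zero]

lemma sum_bernoulliWeight_mul_card {V : Finset α} {J : Finset ι} {T : ι → Finset α} {m : ℕ}
    (hT : ∀ j ∈ J, T j ⊆ V) (hm : ∀ j ∈ J, #(T j) = m) (p : ℝ) :
    ∑ S ∈ V.powerset, bernoulliWeight V p S * #{j ∈ J | T j ⊆ S} = #J * p ^ m := by
  calc ∑ S ∈ V.powerset, bernoulliWeight V p S * #{j ∈ J | T j ⊆ S}
      = ∑ j ∈ J, ∑ S ∈ V.powerset with T j ⊆ S, bernoulliWeight V p S := by
        simp_rw [card_filter, Nat.cast_sum, mul_sum, sum_filter]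
        rw [sum_comm]
        simp
    _ = ∑ _j ∈ J, p ^ m :=
        sum_congr rfl fun j hj => by rw [sum_bernoulliWeight_of_subset (hT j hj), hm j hj]
    _ = #J * p ^ m := by rw [sum_const, nsmul_eq_mul]

end RandomSubsets

section Drawings

open Finset

lemma le_of_lt_of_forall_Ioo_ne {f g : ℝ → ℝ} {x y : ℝ} (hxy : x ≤ y)
    (hf : ContinuousOn f (Set.Icc x y)) (hg : ContinuousOn g (Set.Icc x y))
    (hne : ∀ z ∈ Set.Ioo x y, f z ≠ g z) (hlt : f x < g x) : f y ≤ g y := by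
  by_contra! hgt
  obtain ⟨z, hz, hfg⟩ := isPreconnected_Icc.intermediate_value₂ (Set.left_mem_Icc.2 hxy)
    (Set.right_mem_Icc.2 hxy) hf hg hlt.le hgt.le
  have hxz : z ≠ x := by rintro rfl; exact hlt.ne hfg
  have hzy : z ≠ y := by rintro rfl; exact hgt.ne' hfg
  exact hne z ⟨lt_of_le_of_ne hz.1 hxz.symm, lt_of_le_of_ne hz.2 hzy⟩ hfg

/-- A candidate `x`-monotone arc in the plane: the graph of `toFun` between the abscissae of its
two endpoints. That the graph is continuous and does join the endpoints is part of
`PlaneArc.IsDrawing`. -/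
@[ext]
structure PlaneArc where
  left : ℝ × ℝ
  right : ℝ × ℝ
  toFun : ℝ → ℝ

namespace PlaneArc

instance : CoeFun PlaneArc fun _ => ℝ → ℝ := ⟨toFun⟩

instance : DecidableEq PlaneArc := Classical.decEq _

/-- The abscissae of the interior points of an arc. -/
def span (a : PlaneArc) : Set ℝ := Set.Ioo a.left.1 a.right.1

/-- Two arcs cross when their interiors have a common point; tangencies count. -/
def Crosses (a b : PlaneArc) : Prop := ∃ x ∈ a.span ∩ b.span, a x = b x

instance (a b : PlaneArc) : Decidable (a.Crosses b) := Classical.propDecidable _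

/-- No two distinct arcs of `E` cross. -/
def NonCrossing (E : Finset PlaneArc) : Prop := (E : Set PlaneArc).Pairwise fun a b => ¬ a.Crosses b

/-- `E` is the edge set of a simple graph on the vertex set `V`, drawn with `x`-monotone arcs whose
interiors avoid the vertices. Edges may cross. -/
structure IsDrawing (V : Finset (ℝ × ℝ)) (E : Finset PlaneArc) : Prop where
  left_mem : ∀ a ∈ E, a.left ∈ V
  right_mem : ∀ a ∈ E, a.right ∈ V
  left_lt_right : ∀ a ∈ E, a.left.1 < a.right.1
  continuousOn : ∀ a ∈ E, ContinuousOn a (Set.Icc a.left.1 a.right.1)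
  apply_left : ∀ a ∈ E, a a.left.1 = a.left.2
  apply_right : ∀ a ∈ E, a a.right.1 = a.right.2
  apply_ne : ∀ a ∈ E, ∀ v ∈ V, v.1 ∈ a.span → a v.1 ≠ v.2
  eq_of_endpoints : ∀ a ∈ E, ∀ b ∈ E, a.left = b.left → a.right = b.right → a = b

lemma exists_abscissa (V : Finset (ℝ × ℝ)) (x : ℝ) :
    ∃ ξ, x < ξ ∧ ∀ v ∈ V, x < v.1 → ξ < v.1 := by
  have hgt : ∀ᶠ ξ in nhdsWithin x (Set.Ioi x), x < ξ := self_mem_nhdsWithin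
  have hlt : ∀ᶠ ξ in nhdsWithin x (Set.Ioi x), ∀ v ∈ V, x < v.1 → ξ < v.1 := by
    refine (Filter.eventually_all_finset V).2 fun v _ => ?_
    by_cases hv : x < v.1
    · filter_upwards [(eventually_lt_nhds hv).filter_mono nhdsWithin_le_nhds] with ξ hξ _ using hξ
    · exact Filter.Eventually.of_forall fun ξ h => absurd h hv
  exact (hgt.and hlt).exists

/-- An abscissa right of `x` and left of every vertex that lies to the right of `x`. -/
def nextAbscissa (V : Finset (ℝ × ℝ)) (x : ℝ) : ℝ := (exists_abscissa V x).choose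

lemma lt_nextAbscissa (V : Finset (ℝ × ℝ)) (x : ℝ) : x < nextAbscissa V x :=
  (exists_abscissa V x).choose_spec.1

lemma nextAbscissa_lt {V : Finset (ℝ × ℝ)} {x : ℝ} {v : ℝ × ℝ} (hv : v ∈ V) (hx : x < v.1) :
    nextAbscissa V x < v.1 :=
  (exists_abscissa V x).choose_spec.2 v hv hx

/-- The height of an arc just after its left endpoint; it orders the arcs leaving a common vertex
to the right. -/
def initialHeight (V : Finset (ℝ × ℝ)) (a : PlaneArc) : ℝ := a (nextAbscissa V a.left.1)

/-- `a` is the arc immediately below `b` among the arcs of `E` leaving `b.left` to the right. -/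
structure IsPred (V : Finset (ℝ × ℝ)) (E : Finset PlaneArc) (a b : PlaneArc) : Prop where
  mem : a ∈ E
  left_eq : a.left = b.left
  lt : initialHeight V a < initialHeight V b
  le_or_le : ∀ c ∈ E, c.left = b.left →
    initialHeight V c ≤ initialHeight V a ∨ initialHeight V b ≤ initialHeight V c

/-- `v` is a vertex of the closed region bounded by the arcs `a` and `b`, other than their common
left endpoint. -/
structure IsBetween (V : Finset (ℝ × ℝ)) (a b : PlaneArc) (v : ℝ × ℝ) : Prop where
  mem : v ∈ V
  left_lt : a.left.1 < v.1
  le_right : v.1 ≤ a.right.1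
  le_right' : v.1 ≤ b.right.1
  le_apply : a v.1 ≤ v.2
  apply_le : v.2 ≤ b v.1

/-- `v` is a leftmost vertex between `a` and `b`. -/
structure IsFirstBetween (V : Finset (ℝ × ℝ)) (a b : PlaneArc) (v : ℝ × ℝ) : Prop
    extends IsBetween V a b v where
  fst_le : ∀ w, IsBetween V a b w → v.1 ≤ w.1

namespace IsDrawing

variable {V : Finset (ℝ × ℝ)} {E : Finset PlaneArc} {a b : PlaneArc}

lemma nextAbscissa_mem_span (h : IsDrawing V E) (ha : a ∈ E) : nextAbscissa V a.left.1 ∈ a.span :=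
  ⟨lt_nextAbscissa V _, nextAbscissa_lt (h.right_mem a ha) (h.left_lt_right a ha)⟩

lemma apply_le_apply (h : IsDrawing V E) (hE : NonCrossing E) (ha : a ∈ E) (hb : b ∈ E) {x y : ℝ}
    (hxy : x ≤ y) (hax : a.left.1 ≤ x) (hbx : b.left.1 ≤ x) (hya : y ≤ a.right.1)
    (hyb : y ≤ b.right.1) (hlt : a x < b x) : a y ≤ b y := by
  have hab : a ≠ b := by rintro rfl; exact lt_irrefl _ hlt
  refine le_of_lt_of_forall_Ioo_ne hxy ((h.continuousOn a ha).mono (Set.Icc_subset_Icc hax hya))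
    ((h.continuousOn b hb).mono (Set.Icc_subset_Icc hbx hyb)) (fun z hz heq => ?_) hlt
  exact hE ha hb hab ⟨z, ⟨⟨hax.trans_lt hz.1, hz.2.trans_le hya⟩,
    ⟨hbx.trans_lt hz.1, hz.2.trans_le hyb⟩⟩, heq⟩

lemma eq_of_initialHeight_eq (h : IsDrawing V E) (hE : NonCrossing E) (ha : a ∈ E) (hb : b ∈ E)
    (hl : a.left = b.left) (hh : initialHeight V a = initialHeight V b) : a = b := by
  by_contra hab
  refine hE ha hb hab ⟨_, ⟨h.nextAbscissa_mem_span ha, ?_⟩, ?_⟩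
  · exact hl ▸ h.nextAbscissa_mem_span hb
  · simpa only [initialHeight, hl] using hh

lemma apply_le_apply_of_initialHeight_le (h : IsDrawing V E) (hE : NonCrossing E) (ha : a ∈ E)
    (hb : b ∈ E) (hl : a.left = b.left) (hh : initialHeight V a ≤ initialHeight V b) {v : ℝ × ℝ}
    (hv : v ∈ V) (hlv : a.left.1 < v.1) (hva : v.1 ≤ a.right.1) (hvb : v.1 ≤ b.right.1) :
    a v.1 ≤ b v.1 := by
  rcases hh.eq_or_lt with heq | hlt
  · rw [h.eq_of_initialHeight_eq hE ha hb hl heq]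
  · have hξ := lt_nextAbscissa V a.left.1
    refine h.apply_le_apply hE ha hb (nextAbscissa_lt hv hlv).le hξ.le (hl ▸ hξ.le) hva hvb ?_
    simpa only [initialHeight, hl] using hlt

lemma exists_isPred (ha : a ∈ E) (hl : a.left = b.left)
    (hlt : initialHeight V a < initialHeight V b) : ∃ c, IsPred V E c b := by
  obtain ⟨c, hc, hmax⟩ := exists_max_image
    {c ∈ E | c.left = b.left ∧ initialHeight V c < initialHeight V b} (initialHeight V)
    ⟨a, mem_filter.2 ⟨ha, hl, hlt⟩⟩
  obtain ⟨hcE, hcl, hclt⟩ := mem_filter.1 hc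
  refine ⟨c, hcE, hcl, hclt, fun d hd hdl => ?_⟩
  rcases lt_or_ge (initialHeight V d) (initialHeight V b) with hdb | hbd
  · exact Or.inl (hmax d (mem_filter.2 ⟨hd, hdl, hdb⟩))
  · exact Or.inr hbd

lemma exists_isFirstBetween (h : IsDrawing V E) (hE : NonCrossing E) (hb : b ∈ E)
    (hab : IsPred V E a b) : ∃ v, IsFirstBetween V a b v := by
  classical
  have hne : ∃ v, IsBetween V a b v := by
    have key {v : ℝ × ℝ} (hv : v ∈ V) (hlv : a.left.1 < v.1) (hva : v.1 ≤ a.right.1)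
        (hvb : v.1 ≤ b.right.1) : a v.1 ≤ b v.1 :=
      h.apply_le_apply_of_initialHeight_le hE hab.mem hb hab.left_eq hab.lt.le hv hlv hva hvb
    have hla := h.left_lt_right a hab.mem
    have hlb : a.left.1 < b.right.1 := hab.left_eq ▸ h.left_lt_right b hb
    rcases le_total a.right.1 b.right.1 with hr | hr
    · have hmem := h.right_mem a hab.mem
      have hval := h.apply_right a hab.mem
      exact ⟨a.right, hmem, hla, le_rfl, hr, hval.le, hval ▸ key hmem hla le_rfl hr⟩
    · have hmem := h.right_mem b hb
      have hval := h.apply_right b hb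
      exact ⟨b.right, hmem, hlb, hr, le_rfl, hval ▸ key hmem hlb hr le_rfl, hval.ge⟩
  obtain ⟨w, hw⟩ := hne
  obtain ⟨v, hv, hmin⟩ := exists_min_image {v ∈ V | IsBetween V a b v} Prod.fst
    ⟨w, mem_filter.2 ⟨hw.mem, hw⟩⟩
  exact ⟨v, (mem_filter.1 hv).2, fun u hu => hmin u (mem_filter.2 ⟨hu.mem, hu⟩)⟩

lemma right_eq_of_apply_eq (h : IsDrawing V E) (ha : a ∈ E) {v : ℝ × ℝ} (hv : v ∈ V)
    (hlv : a.left.1 < v.1) (hvr : v.1 ≤ a.right.1) (hval : a v.1 = v.2) : a.right = v := by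
  rcases hvr.eq_or_lt with heq | hlt
  · exact Prod.ext heq.symm (by rw [← h.apply_right a ha, ← heq, hval])
  · exact absurd hval (h.apply_ne a ha v hv ⟨hlv, hlt⟩)

lemma lt_or_lt_of_isBetween (h : IsDrawing V E) (hb : b ∈ E) (hab : IsPred V E a b) {v : ℝ × ℝ}
    (hv : IsBetween V a b v) : a v.1 < v.2 ∨ v.2 < b v.1 := by
  by_contra! hc
  have ha := h.right_eq_of_apply_eq hab.mem hv.mem hv.left_lt hv.le_right
    (hv.le_apply.antisymm hc.1)
  have hb' := h.right_eq_of_apply_eq hb hv.mem (hab.left_eq ▸ hv.left_lt) hv.le_right'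
    (hc.2.antisymm hv.apply_le)
  exact hab.lt.ne (by rw [h.eq_of_endpoints a hab.mem b hb hab.left_eq (ha.trans hb'.symm)])

lemma lt_or_lt_of_isFirstBetween (h : IsDrawing V E) (hb : b ∈ E) (hab : IsPred V E a b)
    {v w : ℝ × ℝ} (hv : IsFirstBetween V a b v) (hw : w ∈ V) (haw : a.left.1 ≤ w.1)
    (hwv : w.1 < v.1) (hne : a.left ≠ w) : b w.1 < w.2 ∨ w.2 < a w.1 := by
  by_contra! hin
  rcases haw.eq_or_lt with heq | hlt
  · have ha := h.apply_left a hab.mem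
    have hb := h.apply_left b hb
    rw [← hab.left_eq] at hb
    rw [← heq, ha, hb] at hin
    exact hne (Prod.ext heq (hin.2.antisymm hin.1))
  · exact hwv.not_ge (hv.fst_le w ⟨hw, hlt, hwv.le.trans hv.le_right, hwv.le.trans hv.le_right',
      hin.2, hin.1⟩)

/-- The arcs of the second pair start outside the region between `a₁` and `b₁`, since that region
has no vertex to the left of `v`; being unable to cross `a₁` and `b₁`, they stay outside. -/
lemma le_or_le_of_isFirstBetween (h : IsDrawing V E) (hE : NonCrossing E) {a₁ b₁ a₂ b₂ : PlaneArc}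
    (hb₁ : b₁ ∈ E) (hb₂ : b₂ ∈ E) (hab₁ : IsPred V E a₁ b₁) (hab₂ : IsPred V E a₂ b₂)
    {v : ℝ × ℝ} (hv₁ : IsFirstBetween V a₁ b₁ v) (hv₂ : IsFirstBetween V a₂ b₂ v) (hne : b₁ ≠ b₂) :
    b₁ v.1 ≤ a₂ v.1 ∨ b₂ v.1 ≤ a₁ v.1 := by
  wlog hle : a₁.left.1 ≤ a₂.left.1 generalizing a₁ b₁ a₂ b₂
  · exact (this hb₂ hb₁ hab₂ hab₁ hv₂ hv₁ hne.symm (not_le.1 hle).le).symm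
  have hl₁ := hab₁.left_eq
  have hl₂ := hab₂.left_eq
  by_cases hl : a₁.left = a₂.left
  · have hl' : b₁.left = b₂.left := by rw [← hl₁, hl, hl₂]
    rcases hab₂.le_or_le b₁ hb₁ hl' with hh | hh
    · exact Or.inl (h.apply_le_apply_of_initialHeight_le hE hb₁ hab₂.mem (hl'.trans hl₂.symm) hh
        hv₁.mem (hl₁ ▸ hv₁.left_lt) hv₁.le_right' hv₂.le_right)
    rcases hab₁.le_or_le b₂ hb₂ hl'.symm with hh' | hh'
    · exact Or.inr (h.apply_le_apply_of_initialHeight_le hE hb₂ hab₁.mem (hl'.symm.trans hl₁.symm)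
        hh' hv₂.mem (hl₂ ▸ hv₂.left_lt) hv₂.le_right' hv₁.le_right)
    · exact absurd (h.eq_of_initialHeight_eq hE hb₁ hb₂ hl' (hh'.antisymm hh)) hne
  · have hp := h.left_mem a₂ hab₂.mem
    have hpv := hv₂.left_lt
    rcases h.lt_or_lt_of_isFirstBetween hb₁ hab₁ hv₁ hp hle hpv hl with habove | hbelow
    · left
      refine h.apply_le_apply hE hb₁ hab₂.mem hpv.le (hl₁ ▸ hle) le_rfl hv₁.le_right'
        hv₂.le_right ?_
      rwa [h.apply_left a₂ hab₂.mem]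
    · right
      refine h.apply_le_apply hE hb₂ hab₁.mem hpv.le (hl₂ ▸ le_rfl) hle hv₂.le_right'
        hv₁.le_right ?_
      rwa [hl₂, h.apply_left b₂ hb₂, ← hl₂]

lemma card_lowest_le (h : IsDrawing V E) (hE : NonCrossing E) :
    #{b ∈ E | ∀ a ∈ E, a.left = b.left → initialHeight V b ≤ initialHeight V a} ≤ #V := by
  refine card_le_card_of_injOn left (fun b hb => h.left_mem b (mem_filter.1 hb).1) ?_
  intro a ha b hb hl
  obtain ⟨haE, ha⟩ := mem_filter.1 ha
  obtain ⟨hbE, hb⟩ := mem_filter.1 hb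
  exact h.eq_of_initialHeight_eq hE haE hbE hl ((ha b hbE hl.symm).antisymm (hb a haE hl))

/-- Charge each arc `b` with a predecessor `a` to a leftmost vertex `v` between them, recording
whether `v` lies strictly above `a` or strictly below `b`. -/
lemma card_not_lowest_le (h : IsDrawing V E) (hE : NonCrossing E) :
    #{b ∈ E | ¬ ∀ a ∈ E, a.left = b.left → initialHeight V b ≤ initialHeight V a} ≤ 2 * #V := by
  have hcard : #(V ×ˢ (univ : Finset Bool)) = 2 * #V := by
    rw [card_product, card_univ, Fintype.card_bool, mul_comm]
  rw [← hcard]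
  refine card_le_card_of_forall_subsingleton (fun b z => ∃ a, IsPred V E a b ∧
    IsFirstBetween V a b z.1 ∧ if z.2 then a z.1.1 < z.1.2 else z.1.2 < b z.1.1) ?_ ?_
  · intro b hb
    obtain ⟨hbE, hlow⟩ := mem_filter.1 hb
    push Not at hlow
    obtain ⟨c, hcE, hcl, hclt⟩ := hlow
    obtain ⟨a, hab⟩ := exists_isPred hcE hcl hclt
    obtain ⟨v, hv⟩ := h.exists_isFirstBetween hE hbE hab
    rcases h.lt_or_lt_of_isBetween hbE hab hv.toIsBetween with hlt | hlt
    · exact ⟨(v, true), by simp [hv.mem], a, hab, hv, hlt⟩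
    · exact ⟨(v, false), by simp [hv.mem], a, hab, hv, by simpa using hlt⟩
  · rintro ⟨v, side⟩ -
    rintro b₁ ⟨hb₁, a₁, hab₁, hv₁, hside₁⟩ b₂ ⟨hb₂, a₂, hab₂, hv₂, hside₂⟩
    by_contra hne
    have hsep := h.le_or_le_of_isFirstBetween hE (mem_filter.1 hb₁).1 (mem_filter.1 hb₂).1
      hab₁ hab₂ hv₁ hv₂ hne
    have := hv₁.le_apply
    have := hv₁.apply_le
    have := hv₂.le_apply
    have := hv₂.apply_le
    cases side <;> simp only [if_true, Bool.false_eq_true, if_false] at hside₁ hside₂ <;>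
      rcases hsep with hsep | hsep <;> linarith

lemma card_le_of_nonCrossing (h : IsDrawing V E) (hE : NonCrossing E) : #E ≤ 3 * #V := by
  have hsplit := card_filter_add_card_filter_not (s := E)
    fun b => ∀ a ∈ E, a.left = b.left → initialHeight V b ≤ initialHeight V a
  have hlow := h.card_lowest_le hE
  have hhigh := h.card_not_lowest_le hE
  omega

end IsDrawing

/-- The two endpoints of an arc. -/
def endpoints (a : PlaneArc) : Finset (ℝ × ℝ) := {a.left, a.right}

/-- The ordered pairs of distinct arcs of `E` that cross. -/
def crossingPairs (E : Finset PlaneArc) : Finset (PlaneArc × PlaneArc) :=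
  {z ∈ E.offDiag | z.1.Crosses z.2}

lemma mem_crossingPairs {E : Finset PlaneArc} {z : PlaneArc × PlaneArc} :
    z ∈ crossingPairs E ↔ z.1 ∈ E ∧ z.2 ∈ E ∧ z.1 ≠ z.2 ∧ z.1.Crosses z.2 := by
  simp only [crossingPairs, mem_filter, mem_offDiag, and_assoc]

namespace IsDrawing

variable {V : Finset (ℝ × ℝ)} {E : Finset PlaneArc}

lemma endpoints_subset (h : IsDrawing V E) {a : PlaneArc} (ha : a ∈ E) : a.endpoints ⊆ V :=
  insert_subset (h.left_mem a ha) (singleton_subset_iff.2 (h.right_mem a ha))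

lemma card_endpoints (h : IsDrawing V E) {a : PlaneArc} (ha : a ∈ E) : #a.endpoints = 2 :=
  card_pair fun heq => (h.left_lt_right a ha).ne (congrArg Prod.fst heq)

lemma restrict (h : IsDrawing V E) {S : Finset (ℝ × ℝ)} {F : Finset PlaneArc} (hS : S ⊆ V)
    (hF : F ⊆ E) (hFS : ∀ a ∈ F, a.endpoints ⊆ S) : IsDrawing S F where
  left_mem a ha := hFS a ha (mem_insert_self _ _)
  right_mem a ha := hFS a ha (mem_insert_of_mem (mem_singleton_self _))
  left_lt_right a ha := h.left_lt_right a (hF ha)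
  continuousOn a ha := h.continuousOn a (hF ha)
  apply_left a ha := h.apply_left a (hF ha)
  apply_right a ha := h.apply_right a (hF ha)
  apply_ne a ha v hv := h.apply_ne a (hF ha) v (hS hv)
  eq_of_endpoints a ha b hb := h.eq_of_endpoints a (hF ha) b (hF hb)

lemma card_le_add_card_crossingPairs (h : IsDrawing V E) :
    #E ≤ 3 * #V + #(crossingPairs E) := by
  have hsub : E \ (crossingPairs E).image Prod.fst ⊆ E := sdiff_subset
  have hnon : NonCrossing (E \ (crossingPairs E).image Prod.fst) := by
    intro a ha b hb hab hcross
    exact (mem_sdiff.1 ha).2 (mem_image.2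
      ⟨(a, b), mem_crossingPairs.2 ⟨hsub ha, hsub hb, hab, hcross⟩, rfl⟩)
  have hplanar := (h.restrict Subset.rfl hsub fun a ha =>
    h.endpoints_subset (hsub ha)).card_le_of_nonCrossing hnon
  have himage : #((crossingPairs E).image Prod.fst) ≤ #(crossingPairs E) := card_image_le
  have hsdiff := le_card_sdiff ((crossingPairs E).image Prod.fst) E
  omega

lemma card_induced_le (h : IsDrawing V E) {S : Finset (ℝ × ℝ)} (hS : S ⊆ V) :
    #{a ∈ E | a.endpoints ⊆ S} ≤
      3 * #S + #{z ∈ crossingPairs E | z.1.endpoints ∪ z.2.endpoints ⊆ S} := by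
  have hpairs : crossingPairs {a ∈ E | a.endpoints ⊆ S} ⊆
      {z ∈ crossingPairs E | z.1.endpoints ∪ z.2.endpoints ⊆ S} := by
    intro z hz
    simp only [mem_crossingPairs, mem_filter, union_subset_iff] at hz ⊢
    tauto
  have hdrawing : IsDrawing S {a ∈ E | a.endpoints ⊆ S} :=
    h.restrict hS (filter_subset _ _) fun a ha => (mem_filter.1 ha).2
  exact hdrawing.card_le_add_card_crossingPairs.trans
    (Nat.add_le_add_left (card_le_card hpairs) _)

/-- Take expectations in `card_induced_le` over a random set `S` of vertices. -/
lemma sq_mul_card_le (h : IsDrawing V E)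
    (hdisj : ∀ z ∈ crossingPairs E, Disjoint z.1.endpoints z.2.endpoints) {p : ℝ} (hp₀ : 0 ≤ p)
    (hp₁ : p ≤ 1) : p ^ 2 * #E ≤ 3 * p * #V + p ^ 4 * #(crossingPairs E) := by
  have hvert : ∑ S ∈ V.powerset, bernoulliWeight V p S * #{v ∈ V | {v} ⊆ S} = #V * p ^ 1 :=
    sum_bernoulliWeight_mul_card (fun v hv => singleton_subset_iff.2 hv)
      (fun v _ => card_singleton v) p
  have hedge : ∑ S ∈ V.powerset, bernoulliWeight V p S * #{a ∈ E | a.endpoints ⊆ S} =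
      #E * p ^ 2 :=
    sum_bernoulliWeight_mul_card (fun a ha => h.endpoints_subset ha)
      (fun a ha => h.card_endpoints ha) p
  have hcross : ∑ S ∈ V.powerset, bernoulliWeight V p S *
      #{z ∈ crossingPairs E | z.1.endpoints ∪ z.2.endpoints ⊆ S} = #(crossingPairs E) * p ^ 4 := by
    refine sum_bernoulliWeight_mul_card (fun z hz => ?_) (fun z hz => ?_) p <;>
      obtain ⟨hz₁, hz₂, -⟩ := mem_crossingPairs.1 hz
    · exact union_subset (h.endpoints_subset hz₁) (h.endpoints_subset hz₂)
    · rw [card_union_of_disjoint (hdisj z hz), h.card_endpoints hz₁, h.card_endpoints hz₂]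
  have hinduced : ∀ S ∈ V.powerset, bernoulliWeight V p S * #{a ∈ E | a.endpoints ⊆ S} ≤
      3 * (bernoulliWeight V p S * #{v ∈ V | {v} ⊆ S}) + bernoulliWeight V p S *
        #{z ∈ crossingPairs E | z.1.endpoints ∪ z.2.endpoints ⊆ S} := by
    intro S hS
    have hVS : {v ∈ V | {v} ⊆ S} = S := by
      ext v
      simpa using fun hv => mem_powerset.1 hS hv
    have hmul := mul_le_mul_of_nonneg_left (Nat.cast_le (α := ℝ).2 <|
      h.card_induced_le (mem_powerset.1 hS)) (bernoulliWeight_nonneg V S hp₀ hp₁)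
    push_cast at hmul
    rw [hVS]
    linarith
  have hsum := sum_le_sum hinduced
  rw [sum_add_distrib, ← mul_sum, hvert, hedge, hcross] at hsum
  linarith

theorem card_pow_three_le (h : IsDrawing V E)
    (hdisj : ∀ z ∈ crossingPairs E, Disjoint z.1.endpoints z.2.endpoints) (hVE : 6 * #V ≤ #E) :
    (#E : ℝ) ^ 3 ≤ 72 * #V ^ 2 * #(crossingPairs E) := by
  rcases E.eq_empty_or_nonempty with rfl | ⟨a, ha⟩
  · simp [crossingPairs]
  have hV : (0 : ℝ) < #V := by exact_mod_cast card_pos.2 ⟨_, h.left_mem a ha⟩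
  have hVE' : (6 : ℝ) * #V ≤ #E := by exact_mod_cast hVE
  have hE : (0 : ℝ) < #E := by linarith
  have hp := h.sq_mul_card_le hdisj (p := 6 * #V / #E) (by positivity) ((div_le_one hE).2 hVE')
  field_simp at hp
  linarith

end IsDrawing

end PlaneArc

end Drawings
section Pseudosegments

open Finset

/-- A family of pseudosegments: graphs of continuous functions over intervals, of which any two
distinct ones have at most one common point. -/
structure PseudosegmentFamily (ι : Type*) where
  dom : ι → Set ℝ
  toFun : ι → ℝ → ℝ
  ordConnected_dom : ∀ i, (dom i).OrdConnected
  continuousOn : ∀ i, ContinuousOn (toFun i) (dom i)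
  subsingleton_of_ne : ∀ i j, i ≠ j → {x ∈ dom i ∩ dom j | toFun i x = toFun j x}.Subsingleton

namespace PseudosegmentFamily

variable {ι : Type*} (F : PseudosegmentFamily ι)

/-- The `i`-th pseudosegment as a subset of the plane. -/
def curve (i : ι) : Set (ℝ × ℝ) := {v | v.1 ∈ F.dom i ∧ F.toFun i v.1 = v.2}

open Classical in
/-- The pairs consisting of a pseudosegment with index in `L` and a point of `P` on it. -/
def incidences (L : Finset ι) (P : Finset (ℝ × ℝ)) : Finset (ι × ℝ × ℝ) :=
  {z ∈ L ×ˢ P | z.2 ∈ F.curve z.1}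

/-- `a` is the part of the `i`-th pseudosegment between two consecutive points of `P` on it. These
arcs are the edges of Székely's graph. -/
structure IsConsecutiveArc (P : Finset (ℝ × ℝ)) (i : ι) (a : PlaneArc) : Prop where
  left_mem : a.left ∈ P
  right_mem : a.right ∈ P
  left_lt_right : a.left.1 < a.right.1
  left_mem_curve : a.left ∈ F.curve i
  right_mem_curve : a.right ∈ F.curve i
  notMem_curve : ∀ v ∈ P, v.1 ∈ a.span → v ∉ F.curve i
  toFun_eq : a.toFun = F.toFun i

open Classical in
/-- The arcs that the points of `P` cut out of the pseudosegments with index in `L`. -/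
def consecutiveArcs (L : Finset ι) (P : Finset (ℝ × ℝ)) : Finset PlaneArc :=
  {a ∈ (L ×ˢ P ×ˢ P).image fun z => ⟨z.2.1, z.2.2, F.toFun z.1⟩ |
    ∃ i ∈ L, F.IsConsecutiveArc P i a}

variable {F} {L : Finset ι} {P : Finset (ℝ × ℝ)} {i j : ι} {a b : PlaneArc}

lemma mem_incidences {z : ι × ℝ × ℝ} :
    z ∈ F.incidences L P ↔ z.1 ∈ L ∧ z.2 ∈ P ∧ z.2 ∈ F.curve z.1 := by
  simp only [incidences, mem_filter, mem_product, and_assoc]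

lemma mem_consecutiveArcs :
    a ∈ F.consecutiveArcs L P ↔ ∃ i ∈ L, F.IsConsecutiveArc P i a := by
  classical
  rw [consecutiveArcs, mem_filter, and_iff_right_iff_imp]
  rintro ⟨i, hi, ha⟩
  exact mem_image.2 ⟨(i, a.left, a.right), by simp [hi, ha.left_mem, ha.right_mem],
    by rw [← ha.toFun_eq]⟩

lemma eq_of_fst_eq_of_mem_curve {v w : ℝ × ℝ} (hv : v ∈ F.curve i) (hw : w ∈ F.curve i)
    (hvw : v.1 = w.1) : v = w :=
  Prod.ext hvw (by rw [← hv.2, ← hw.2, hvw])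

lemma eq_of_mem_curve {v w : ℝ × ℝ} (hvi : v ∈ F.curve i) (hvj : v ∈ F.curve j)
    (hwi : w ∈ F.curve i) (hwj : w ∈ F.curve j) (hvw : v.1 ≠ w.1) : i = j := by
  by_contra hij
  exact hvw (F.subsingleton_of_ne i j hij ⟨⟨hvi.1, hvj.1⟩, hvi.2.trans hvj.2.symm⟩
    ⟨⟨hwi.1, hwj.1⟩, hwi.2.trans hwj.2.symm⟩)

namespace IsConsecutiveArc

lemma Icc_subset_dom (ha : F.IsConsecutiveArc P i a) :
    Set.Icc a.left.1 a.right.1 ⊆ F.dom i :=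
  (F.ordConnected_dom i).out ha.left_mem_curve.1 ha.right_mem_curve.1

lemma mem_curve_of_mem_span (ha : F.IsConsecutiveArc P i a) {x : ℝ} (hx : x ∈ a.span) :
    (x, a x) ∈ F.curve i :=
  ⟨ha.Icc_subset_dom (Set.Ioo_subset_Icc_self hx), by rw [ha.toFun_eq]⟩

lemma endpoints_subset_curve (ha : F.IsConsecutiveArc P i a) : ↑a.endpoints ⊆ F.curve i := by
  simp [PlaneArc.endpoints, Set.insert_subset_iff, ha.left_mem_curve, ha.right_mem_curve]

lemma index_unique (hi : F.IsConsecutiveArc P i a) (hj : F.IsConsecutiveArc P j a) : i = j :=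
  eq_of_mem_curve hi.left_mem_curve hj.left_mem_curve hi.right_mem_curve hj.right_mem_curve
    hi.left_lt_right.ne

lemma eq_of_mem_span (ha : F.IsConsecutiveArc P i a) (hb : F.IsConsecutiveArc P i b) {x : ℝ}
    (hxa : x ∈ a.span) (hxb : x ∈ b.span) : a = b := by
  have hleft : a.left.1 = b.left.1 := by
    by_contra hne
    rcases lt_or_gt_of_ne hne with hlt | hlt
    · exact ha.notMem_curve _ hb.left_mem ⟨hlt, hxb.1.trans hxa.2⟩ hb.left_mem_curve
    · exact hb.notMem_curve _ ha.left_mem ⟨hlt, hxa.1.trans hxb.2⟩ ha.left_mem_curve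
  have hright : a.right.1 = b.right.1 := by
    by_contra hne
    rcases lt_or_gt_of_ne hne with hlt | hlt
    · exact hb.notMem_curve _ ha.right_mem ⟨hxb.1.trans hxa.2, hlt⟩ ha.right_mem_curve
    · exact ha.notMem_curve _ hb.right_mem ⟨hxa.1.trans hxb.2, hlt⟩ hb.right_mem_curve
  exact PlaneArc.ext (eq_of_fst_eq_of_mem_curve ha.left_mem_curve hb.left_mem_curve hleft)
    (eq_of_fst_eq_of_mem_curve ha.right_mem_curve hb.right_mem_curve hright)
    (ha.toFun_eq.trans hb.toFun_eq.symm)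

lemma index_ne_of_crosses (ha : F.IsConsecutiveArc P i a) (hb : F.IsConsecutiveArc P j b)
    (hab : a ≠ b) (hcross : a.Crosses b) : i ≠ j := by
  rintro rfl
  obtain ⟨x, ⟨hxa, hxb⟩, -⟩ := hcross
  exact hab (ha.eq_of_mem_span hb hxa hxb)

lemma disjoint_endpoints_of_crosses (ha : F.IsConsecutiveArc P i a)
    (hb : F.IsConsecutiveArc P j b) (hab : a ≠ b) (hcross : a.Crosses b) :
    Disjoint a.endpoints b.endpoints := by
  have hij := ha.index_ne_of_crosses hb hab hcross
  obtain ⟨x, ⟨hxa, hxb⟩, hx⟩ := hcross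
  refine disjoint_left.2 fun v hva hvb => ?_
  have hvx : v.1 ≠ x := by
    rintro rfl
    rcases mem_insert.1 hva with rfl | hv
    · exact lt_irrefl _ hxa.1
    · exact lt_irrefl _ (mem_singleton.1 hv ▸ hxa.2)
  exact hij (eq_of_mem_curve (ha.endpoints_subset_curve hva) (hb.endpoints_subset_curve hvb)
    (ha.mem_curve_of_mem_span hxa) (hx ▸ hb.mem_curve_of_mem_span hxb) hvx)

end IsConsecutiveArc

lemma isDrawing_consecutiveArcs (F : PseudosegmentFamily ι) (L : Finset ι)
    (P : Finset (ℝ × ℝ)) : PlaneArc.IsDrawing P (F.consecutiveArcs L P) := by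
  constructor <;> intro a ha <;> obtain ⟨i, -, hai⟩ := mem_consecutiveArcs.1 ha
  · exact hai.left_mem
  · exact hai.right_mem
  · exact hai.left_lt_right
  · exact hai.toFun_eq ▸ (F.continuousOn i).mono hai.Icc_subset_dom
  · exact hai.toFun_eq ▸ hai.left_mem_curve.2
  · exact hai.toFun_eq ▸ hai.right_mem_curve.2
  · intro v hv hspan hval
    have hmem := hai.mem_curve_of_mem_span hspan
    rw [hval] at hmem
    exact hai.notMem_curve v hv hspan hmem
  · intro b hb hleft hright
    obtain ⟨j, -, hbj⟩ := mem_consecutiveArcs.1 hb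
    have hij : i = j := eq_of_mem_curve hai.left_mem_curve (hleft ▸ hbj.left_mem_curve)
      hai.right_mem_curve (hright ▸ hbj.right_mem_curve) hai.left_lt_right.ne
    exact PlaneArc.ext hleft hright (by rw [hai.toFun_eq, hbj.toFun_eq, hij])

lemma disjoint_endpoints_of_mem_crossingPairs {z : PlaneArc × PlaneArc}
    (hz : z ∈ PlaneArc.crossingPairs (F.consecutiveArcs L P)) :
    Disjoint z.1.endpoints z.2.endpoints := by
  obtain ⟨ha, hb, hab, hcross⟩ := PlaneArc.mem_crossingPairs.1 hz
  obtain ⟨i, -, hai⟩ := mem_consecutiveArcs.1 ha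
  obtain ⟨j, -, hbj⟩ := mem_consecutiveArcs.1 hb
  exact hai.disjoint_endpoints_of_crosses hbj hab hcross

lemma card_crossingPairs_le (F : PseudosegmentFamily ι) (L : Finset ι) (P : Finset (ℝ × ℝ)) :
    #(PlaneArc.crossingPairs (F.consecutiveArcs L P)) ≤ #L ^ 2 := by
  rw [sq, ← card_product]
  refine card_le_card_of_forall_subsingleton (fun z k =>
    F.IsConsecutiveArc P k.1 z.1 ∧ F.IsConsecutiveArc P k.2 z.2) ?_ ?_
  · intro z hz
    obtain ⟨ha, hb, -⟩ := PlaneArc.mem_crossingPairs.1 hz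
    obtain ⟨i, hi, hai⟩ := mem_consecutiveArcs.1 ha
    obtain ⟨j, hj, hbj⟩ := mem_consecutiveArcs.1 hb
    exact ⟨(i, j), mem_product.2 ⟨hi, hj⟩, hai, hbj⟩
  · rintro ⟨i, j⟩ - z ⟨hz, hai, hbj⟩ z' ⟨hz', hai', hbj'⟩
    obtain ⟨-, -, hne, hcross⟩ := PlaneArc.mem_crossingPairs.1 hz
    obtain ⟨-, -, -, x', ⟨hxa', hxb'⟩, hx'⟩ := PlaneArc.mem_crossingPairs.1 hz'
    have hij := hai.index_ne_of_crosses hbj hne hcross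
    obtain ⟨x, ⟨hxa, hxb⟩, hx⟩ := hcross
    obtain rfl : x = x' := by
      by_contra hxx
      exact hij (eq_of_mem_curve (hai.mem_curve_of_mem_span hxa)
        (hx ▸ hbj.mem_curve_of_mem_span hxb) (hai'.mem_curve_of_mem_span hxa')
        (hx' ▸ hbj'.mem_curve_of_mem_span hxb') hxx)
    exact Prod.ext (hai.eq_of_mem_span hai' hxa hxa') (hbj.eq_of_mem_span hbj' hxb hxb')

lemma exists_isConsecutiveArc {v w : ℝ × ℝ} (hvP : v ∈ P) (hvi : v ∈ F.curve i) (hwP : w ∈ P)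
    (hwi : w ∈ F.curve i) (hvw : v.1 < w.1) : ∃ a, F.IsConsecutiveArc P i a ∧ a.left = v := by
  classical
  obtain ⟨u, hu, hmin⟩ := exists_min_image {u ∈ P | u ∈ F.curve i ∧ v.1 < u.1} Prod.fst
    ⟨w, mem_filter.2 ⟨hwP, hwi, hvw⟩⟩
  obtain ⟨huP, hui, hvu⟩ := mem_filter.1 hu
  refine ⟨⟨v, u, F.toFun i⟩, ⟨hvP, huP, hvu, hvi, hui, fun q hq hspan hqi => ?_, rfl⟩, rfl⟩
  exact hspan.2.not_ge (hmin q (mem_filter.2 ⟨hq, hqi, hspan.1⟩))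

lemma card_incidences_le_card_consecutiveArcs_add (F : PseudosegmentFamily ι) (L : Finset ι)
    (P : Finset (ℝ × ℝ)) : #(F.incidences L P) ≤ #(F.consecutiveArcs L P) + #L := by
  classical
  let IsLast (z : ι × ℝ × ℝ) : Prop := ∀ w ∈ P, w ∈ F.curve z.1 → w.1 ≤ z.2.1
  have hlast : #{z ∈ F.incidences L P | IsLast z} ≤ #L := by
    refine card_le_card_of_injOn Prod.fst
      (fun z hz => (mem_incidences.1 (mem_filter.1 hz).1).1) ?_
    rintro ⟨i, v⟩ hv ⟨-, w⟩ hw rfl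
    obtain ⟨hv, hvlast⟩ := mem_filter.1 hv
    obtain ⟨hw, hwlast⟩ := mem_filter.1 hw
    obtain ⟨-, hvP, hvi⟩ := mem_incidences.1 hv
    obtain ⟨-, hwP, hwi⟩ := mem_incidences.1 hw
    exact Prod.ext rfl (eq_of_fst_eq_of_mem_curve hvi hwi
      ((hwlast v hvP hvi).antisymm (hvlast w hwP hwi)))
  have hnext : #{z ∈ F.incidences L P | ¬ IsLast z} ≤ #(F.consecutiveArcs L P) := by
    refine card_le_card_of_forall_subsingleton
      (fun z a => F.IsConsecutiveArc P z.1 a ∧ a.left = z.2) (fun z hz => ?_) ?_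
    · obtain ⟨hz, hnot⟩ := mem_filter.1 hz
      obtain ⟨hi, hzP, hzi⟩ := mem_incidences.1 hz
      simp only [IsLast, not_forall, not_le] at hnot
      obtain ⟨w, hwP, hwi, hlt⟩ := hnot
      obtain ⟨a, ha, hleft⟩ := exists_isConsecutiveArc hzP hzi hwP hwi hlt
      exact ⟨a, mem_consecutiveArcs.2 ⟨z.1, hi, ha⟩, ha, hleft⟩
    · rintro a - z ⟨-, hz, hleft⟩ z' ⟨-, hz', hleft'⟩
      exact Prod.ext (hz.index_unique hz') (hleft.symm.trans hleft')
  rw [← card_filter_add_card_filter_not fun z => IsLast z, add_comm]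
  exact Nat.add_le_add hnext hlast

theorem card_incidences_le (F : PseudosegmentFamily ι) (L : Finset ι) (P : Finset (ℝ × ℝ)) :
    (#(F.incidences L P) : ℝ) ≤ 5 * (#L * #P : ℝ) ^ (2 / 3 : ℝ) + 6 * #P + #L := by
  set E := F.consecutiveArcs L P
  have hinc : (#(F.incidences L P) : ℝ) ≤ #E + #L := by
    exact_mod_cast F.card_incidences_le_card_consecutiveArcs_add L P
  have hpos : (0 : ℝ) ≤ (#L * #P : ℝ) ^ (2 / 3 : ℝ) := by positivity
  rcases lt_or_ge #E (6 * #P) with hfew | hmany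
  · have : (#E : ℝ) ≤ 6 * #P := by exact_mod_cast hfew.le
    linarith
  · have hcross : (#(PlaneArc.crossingPairs E) : ℝ) ≤ #L ^ 2 := by
      exact_mod_cast F.card_crossingPairs_le L P
    have hcube : (#E : ℝ) ^ 3 ≤ (5 * (#L * #P : ℝ) ^ (2 / 3 : ℝ)) ^ 3 := by
      calc (#E : ℝ) ^ 3 ≤ 72 * #P ^ 2 * #(PlaneArc.crossingPairs E) :=
            (F.isDrawing_consecutiveArcs L P).card_pow_three_le
              (fun z hz => disjoint_endpoints_of_mem_crossingPairs hz) hmany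
        _ ≤ 72 * #P ^ 2 * #L ^ 2 := by gcongr
        _ ≤ 125 * (#L * #P : ℝ) ^ 2 := by nlinarith [sq_nonneg (#L * #P : ℝ)]
        _ = (5 * (#L * #P : ℝ) ^ (2 / 3 : ℝ)) ^ 3 := by
            rw [mul_pow _ _ 3, ← Real.rpow_mul_natCast (by positivity)]
            norm_num
    have hE := le_of_pow_le_pow_left₀ three_ne_zero (by positivity) hcube
    have : (0 : ℝ) ≤ #P := by positivity
    linarith

end PseudosegmentFamily

end Pseudosegments

section HyperbolicPlane

open Finset UpperHalfPlane

lemma sq_add_sq_add_sq_eq_cosh_dist (p q : ℍ) :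
    (q.re - p.re) ^ 2 + q.im ^ 2 + p.im ^ 2 = 2 * Real.cosh (dist p q) * q.im * p.im := by
  rw [UpperHalfPlane.cosh_dist']
  field_simp
  ring

section CommonPoints

variable {a' b' x' y' a b x y c : ℝ}

/-- In the hyperboloid model the equations say that the Lorentz form takes one value on all pairs of
a centre and a point. The sum of the centres and the sum of the points are then both orthogonal to
the difference `D` of the centres and to the difference `W` of the points, so either the two sums
are proportional or `D` and `W` are; as `D` and `W` are orthogonal and spacelike, one of them then
vanishes. In the coordinates `(1 / b, a / b, (a ^ 2 + b ^ 2) / b)` the first alternative below and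
`hdiffs` are the vanishing of a minor of the two sums and of `D` and `W`. -/
lemma sums_proportional_or_centre_eq (hb : 0 < b) (hb' : 0 < b') (hyy : y ≠ y')
    (h₁ : (x - a) ^ 2 + y ^ 2 + b ^ 2 = 2 * c * y * b)
    (h₂ : (x - a') ^ 2 + y ^ 2 + b' ^ 2 = 2 * c * y * b')
    (h₃ : (x' - a) ^ 2 + y' ^ 2 + b ^ 2 = 2 * c * y' * b)
    (h₄ : (x' - a') ^ 2 + y' ^ 2 + b' ^ 2 = 2 * c * y' * b') :
    y' * b' * (x - a) + y' * b * (x - a') + y * b' * (x' - a) + y * b * (x' - a') = 0 ∨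
      (a = a' ∧ b = b') := by
  have hprod : (y' * b' * (x - a) + y' * b * (x - a') + y * b' * (x' - a) + y * b * (x' - a')) *
      ((y' - y) * (a * b' - a' * b) - (b' - b) * (x * y' - x' * y)) = 0 := by
    linear_combination -y' * b' * (b' * y' - b * y) * h₁ - y' * b * (b' * y - b * y') * h₂ -
      y * b' * (b * y' - b' * y) * h₃ + y * b * (b' * y' - b * y) * h₄
  refine (mul_eq_zero.1 hprod).imp_right fun hdiffs => ?_
  have hdist : (b + b') * (y' - y) * ((a - a') ^ 2 + (b - b') ^ 2) = 0 := by
    linear_combination -(b' - b) * (y' * (h₁ - h₂) - y * (h₃ - h₄)) - 2 * (a' - a) * hdiffs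
  have hsq := (mul_eq_zero.1 hdist).resolve_left
    (mul_ne_zero (add_pos hb hb').ne' (sub_ne_zero.2 hyy.symm))
  rw [add_eq_zero_iff_of_nonneg (sq_nonneg _) (sq_nonneg _), sq_eq_zero_iff, sq_eq_zero_iff,
    sub_eq_zero, sub_eq_zero] at hsq
  exact hsq

lemma centre_height_eq_of_vertical (hb : 0 < b) (hyy : y ≠ y')
    (h₁ : y ^ 2 + b ^ 2 = 2 * c * y * b) (h₂ : y ^ 2 + b' ^ 2 = 2 * c * y * b')
    (h₃ : y' ^ 2 + b ^ 2 = 2 * c * y' * b) (h₄ : y' ^ 2 + b' ^ 2 = 2 * c * y' * b') : b = b' := by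
  have hc : c ≠ 0 := by
    rintro rfl
    nlinarith
  have hsum : y + y' = 2 * c * b :=
    mul_left_cancel₀ (sub_ne_zero.2 hyy) (by linear_combination h₁ - h₃)
  have hsum' : y + y' = 2 * c * b' :=
    mul_left_cancel₀ (sub_ne_zero.2 hyy) (by linear_combination h₂ - h₄)
  exact mul_left_cancel₀ (mul_ne_zero two_ne_zero hc) (hsum.symm.trans hsum')

lemma centre_eq_of_common_points (hb : 0 < b) (hb' : 0 < b') (hy : 0 < y) (hy' : 0 < y')
    (hyy : y ≠ y') (h₁ : (x - a) ^ 2 + y ^ 2 + b ^ 2 = 2 * c * y * b)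
    (h₂ : (x - a') ^ 2 + y ^ 2 + b' ^ 2 = 2 * c * y * b')
    (h₃ : (x' - a) ^ 2 + y' ^ 2 + b ^ 2 = 2 * c * y' * b)
    (h₄ : (x' - a') ^ 2 + y' ^ 2 + b' ^ 2 = 2 * c * y' * b')
    (hax : a ≤ x) (ha'x : a' ≤ x) (hax' : a ≤ x') (ha'x' : a' ≤ x') : a = a' ∧ b = b' := by
  rcases sums_proportional_or_centre_eq hb hb' hyy h₁ h₂ h₃ h₄ with hsums | heq
  · have n₁ := mul_nonneg (mul_pos hy' hb').le (sub_nonneg.2 hax)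
    have n₂ := mul_nonneg (mul_pos hy' hb).le (sub_nonneg.2 ha'x)
    have n₃ := mul_nonneg (mul_pos hy hb').le (sub_nonneg.2 hax')
    have n₄ := mul_nonneg (mul_pos hy hb).le (sub_nonneg.2 ha'x')
    have z₁ : x - a = 0 := (mul_eq_zero.1 (by linarith)).resolve_left (mul_pos hy' hb').ne'
    have z₂ : x - a' = 0 := (mul_eq_zero.1 (by linarith)).resolve_left (mul_pos hy' hb).ne'
    have z₃ : x' - a = 0 := (mul_eq_zero.1 (by linarith)).resolve_left (mul_pos hy hb').ne'
    have z₄ : x' - a' = 0 := (mul_eq_zero.1 (by linarith)).resolve_left (mul_pos hy hb).ne'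
    rw [z₁, zero_pow two_ne_zero, zero_add] at h₁
    rw [z₂, zero_pow two_ne_zero, zero_add] at h₂
    rw [z₃, zero_pow two_ne_zero, zero_add] at h₃
    rw [z₄, zero_pow two_ne_zero, zero_add] at h₄
    exact ⟨by linarith, centre_height_eq_of_vertical hb hyy h₁ h₂ h₃ h₄⟩
  · exact heq

end CommonPoints

/-- The imaginary parts of the points of the hyperbolic circle with centre `p` and radius `t`. -/
def circleHeights (t : ℝ) (p : ℍ) : Set ℝ :=
  {y | y ^ 2 + p.im ^ 2 ≤ 2 * Real.cosh t * y * p.im}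

/-- The real part of the rightmost point of height `y` on the hyperbolic circle with centre `p` and
radius `t`; meaningful only for `y ∈ circleHeights t p`, as the square root vanishes elsewhere. -/
def rightAbscissa (t : ℝ) (p : ℍ) (y : ℝ) : ℝ :=
  p.re + √(2 * Real.cosh t * y * p.im - y ^ 2 - p.im ^ 2)

variable {t y : ℝ} {p : ℍ}

lemma pos_of_mem_circleHeights (hy : y ∈ circleHeights t p) : 0 < y := by
  have hprod : 0 < y * (2 * Real.cosh t * p.im) := by
    calc 0 < y ^ 2 + p.im ^ 2 := by positivity
      _ ≤ 2 * Real.cosh t * y * p.im := hy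
      _ = y * (2 * Real.cosh t * p.im) := by ring
  exact pos_of_mul_pos_left hprod (by positivity)

lemma ordConnected_circleHeights (t : ℝ) (p : ℍ) : (circleHeights t p).OrdConnected := by
  refine ⟨fun y₁ hy₁ y₂ hy₂ z hz => ?_⟩
  simp only [circleHeights, Set.mem_ofPred_eq] at hy₁ hy₂ ⊢
  rcases le_total (z + y₁) (2 * Real.cosh t * p.im) with hle | hge
  · nlinarith [mul_nonneg (sub_nonneg.2 hz.1) (sub_nonneg.2 hle)]
  · have hge' : 2 * Real.cosh t * p.im ≤ z + y₂ := by linarith [hz.1, hz.2]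
    nlinarith [mul_nonneg (sub_nonneg.2 hz.2) (sub_nonneg.2 hge')]

lemma le_rightAbscissa (t : ℝ) (p : ℍ) (y : ℝ) : p.re ≤ rightAbscissa t p y :=
  le_add_of_nonneg_right (Real.sqrt_nonneg _)

lemma rightAbscissa_sub_sq_add (hy : y ∈ circleHeights t p) :
    (rightAbscissa t p y - p.re) ^ 2 + y ^ 2 + p.im ^ 2 = 2 * Real.cosh t * y * p.im := by
  have hnonneg : 0 ≤ 2 * Real.cosh t * y * p.im - y ^ 2 - p.im ^ 2 := by
    have : y ^ 2 + p.im ^ 2 ≤ 2 * Real.cosh t * y * p.im := hy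
    linarith
  rw [rightAbscissa, add_sub_cancel_left, Real.sq_sqrt hnonneg]
  ring

/-- The right halves of the hyperbolic circles of radius `t`, indexed by their hyperbolic centres.
They are graphs over the imaginary axis, so a point of the plane has to be written with its
coordinates in the order of `imRe`. -/
def rightSemicircles (t : ℝ) : PseudosegmentFamily ℍ where
  dom := circleHeights t
  toFun := rightAbscissa t
  ordConnected_dom := ordConnected_circleHeights t
  continuousOn p := by unfold rightAbscissa; fun_prop
  subsingleton_of_ne p p' hne := by
    rintro y ⟨⟨hy, hy'⟩, heq⟩ z ⟨⟨hz, hz'⟩, heq'⟩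
    by_contra hyz
    have hcentre := centre_eq_of_common_points p.im_pos p'.im_pos (pos_of_mem_circleHeights hy)
      (pos_of_mem_circleHeights hz) hyz (rightAbscissa_sub_sq_add hy)
      (heq ▸ rightAbscissa_sub_sq_add hy') (rightAbscissa_sub_sq_add hz)
      (heq' ▸ rightAbscissa_sub_sq_add hz') (le_rightAbscissa t p y)
      (heq ▸ le_rightAbscissa t p' y) (le_rightAbscissa t p z) (heq' ▸ le_rightAbscissa t p' z)
    exact hne (UpperHalfPlane.ext (Complex.ext hcentre.1 hcentre.2))

/-- The coordinates of a point of the upper half-plane, imaginary part first. -/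
def imRe : ℍ ↪ ℝ × ℝ where
  toFun q := (q.im, q.re)
  inj' _ _ h := UpperHalfPlane.ext (Complex.ext (congrArg Prod.snd h) (congrArg Prod.fst h))

lemma imRe_mem_curve_rightSemicircles {q : ℍ} (hdist : dist p q = t) (hre : p.re ≤ q.re) :
    imRe q ∈ (rightSemicircles t).curve p := by
  have heq := sq_add_sq_add_sq_eq_cosh_dist p q
  rw [hdist] at heq
  have hsq : 2 * Real.cosh t * q.im * p.im - q.im ^ 2 - p.im ^ 2 = (q.re - p.re) ^ 2 := by
    linarith
  refine ⟨?_, ?_⟩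
  · change q.im ^ 2 + p.im ^ 2 ≤ 2 * Real.cosh t * q.im * p.im
    linarith [sq_nonneg (q.re - p.re)]
  · change p.re + √(2 * Real.cosh t * q.im * p.im - q.im ^ 2 - p.im ^ 2) = q.re
    rw [hsq, Real.sqrt_sq (sub_nonneg.2 hre), add_sub_cancel]

lemma card_dist_eq_and_re_le (P Q : Finset ℍ) (t : ℝ) :
    (#{z ∈ P ×ˢ Q | dist z.1 z.2 = t ∧ z.1.re ≤ z.2.re} : ℝ) ≤
      5 * (#P * #Q : ℝ) ^ (2 / 3 : ℝ) + 6 * #Q + #P := by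
  have hle : #{z ∈ P ×ˢ Q | dist z.1 z.2 = t ∧ z.1.re ≤ z.2.re} ≤
      #((rightSemicircles t).incidences P (Q.map imRe)) := by
    refine card_le_card_of_injOn (Prod.map id imRe) (fun z hz => ?_)
      (Function.injective_id.prodMap imRe.injective).injOn
    obtain ⟨hPQ, hdist, hre⟩ := mem_filter.1 hz
    obtain ⟨hP, hQ⟩ := mem_product.1 hPQ
    exact PseudosegmentFamily.mem_incidences.2
      ⟨hP, mem_map_of_mem imRe hQ, imRe_mem_curve_rightSemicircles hdist hre⟩
  have hinc := (rightSemicircles t).card_incidences_le P (Q.map imRe)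
  rw [card_map] at hinc
  exact (Nat.cast_le.2 hle).trans hinc

theorem card_dist_eq_le (P Q : Finset ℍ) (t : ℝ) :
    (#{z ∈ P ×ˢ Q | dist z.1 z.2 = t} : ℝ) ≤
      10 * (#P * #Q : ℝ) ^ (2 / 3 : ℝ) + 7 * #P + 7 * #Q := by
  have hcover : #{z ∈ P ×ˢ Q | dist z.1 z.2 = t} ≤
      #{z ∈ P ×ˢ Q | dist z.1 z.2 = t ∧ z.1.re ≤ z.2.re} +
        #{z ∈ Q ×ˢ P | dist z.1 z.2 = t ∧ z.1.re ≤ z.2.re} := by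
    rw [← card_filter_add_card_filter_not fun z : ℍ × ℍ => z.1.re ≤ z.2.re, filter_filter,
      filter_filter]
    refine Nat.add_le_add_left (card_le_card_of_injOn Prod.swap (fun z hz => ?_)
      Prod.swap_injective.injOn) _
    obtain ⟨hPQ, hdist, hre⟩ := mem_filter.1 hz
    obtain ⟨hP, hQ⟩ := mem_product.1 hPQ
    exact mem_filter.2 ⟨mem_product.2 ⟨hQ, hP⟩, by rwa [dist_comm], (not_le.1 hre).le⟩
  have hright := card_dist_eq_and_re_le P Q t
  have hleft := card_dist_eq_and_re_le Q P t
  rw [mul_comm (#Q : ℝ)] at hleft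
  have : (#{z ∈ P ×ˢ Q | dist z.1 z.2 = t} : ℝ) ≤ _ := Nat.cast_le.2 hcover
  push_cast at this
  linarith

end HyperbolicPlane

/-- There is an absolute constant `C > 0` such that for every finite set `P` of `N`
points in the hyperbolic plane and every `t > 0`, the number of ordered pairs of points
of `P` at distance exactly `t` is at most `C · N^(4/3)`. -/
theorem unit_distances_hyperbolic_plane :
    ∃ C : ℝ, 0 < C ∧ ∀ (P : Finset ℍ) (t : ℝ), 0 < t →
      ({x : ℍ × ℍ | x.1 ∈ P ∧ x.2 ∈ P ∧ dist x.1 x.2 = t}.ncard : ℝ) ≤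
        C * (P.card : ℝ) ^ ((4 : ℝ) / 3) := by
  refine ⟨24, by norm_num, fun P t _ => ?_⟩
  have hset : {x : ℍ × ℍ | x.1 ∈ P ∧ x.2 ∈ P ∧ dist x.1 x.2 = t} =
      ({z ∈ P ×ˢ P | dist z.1 z.2 = t} : Finset (ℍ × ℍ)) := by
    ext z
    simp [and_assoc]
  have hpow : (P.card * P.card : ℝ) ^ (2 / 3 : ℝ) = (P.card : ℝ) ^ (4 / 3 : ℝ) := by
    rw [← sq, ← Real.rpow_natCast_mul (Nat.cast_nonneg _)]
    norm_num
  have hlinear : (P.card : ℝ) ≤ (P.card : ℝ) ^ (4 / 3 : ℝ) := by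
    rcases P.card.eq_zero_or_pos with hzero | hpos
    · simp [hzero]
    · exact Real.self_le_rpow_of_one_le (by exact_mod_cast hpos) (by norm_num)
  rw [hset, Set.ncard_coe_finset]
  have hcount := card_dist_eq_le P P t
  rw [hpow] at hcount
  linarith

end
end

section
/- Let z₁, z₂ ∈ ℍ² satisfy 0 < Re z₁ ≤ 1 and 0 < Re z₂ ≤ 1 (i.e. both lie in the strip fundamental domain of the group of integer translations). Then inf_{n ∈ ℤ} d(z₁, z₂ + n) = min_{n ∈ {−1, 0, 1}} d(z₁, z₂ + n). In particular, the geodesic-covering number of the translation group {(1 n; 0 1) : n ∈ ℤ} ≤ SL(2,ℝ) is at most 3. -/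
open scoped UpperHalfPlane

noncomputable section

/-!
For `w` of fixed height, the distance `d(z, w)` increases with `|Re z - Re w|`. Hence `d(z, w + n)`
is smallest when the integer `n` is nearest to `Re z - Re w`. In the strip this difference lies in
`(-1, 1)`, and as long as its absolute value is at most `3/2`, one of `-1, 0, 1` is nearest to it.
-/

theorem dist_le_dist_iff_abs_re_sub_le {z w w' : ℍ} (him : w.im = w'.im) :
    dist z w ≤ dist z w' ↔ |z.re - w.re| ≤ |z.re - w'.re| := by
  have hpos : 0 < 2 * z.im * w'.im := by positivity
  calc dist z w ≤ dist z w' ↔ Real.cosh (dist z w) ≤ Real.cosh (dist z w') := by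
        rw [Real.cosh_le_cosh, abs_of_nonneg dist_nonneg, abs_of_nonneg dist_nonneg]
    _ ↔ (z.re - w.re) ^ 2 ≤ (z.re - w'.re) ^ 2 := by
        rw [UpperHalfPlane.cosh_dist', UpperHalfPlane.cosh_dist', him,
          div_le_div_iff_of_pos_right hpos, add_assoc, add_assoc, add_le_add_iff_right]
    _ ↔ |z.re - w.re| ≤ |z.re - w'.re| := sq_le_sq

theorem dist_vadd_le_dist_vadd_iff {z w : ℍ} {a b : ℝ} :
    dist z (a +ᵥ w) ≤ dist z (b +ᵥ w) ↔ |z.re - w.re - a| ≤ |z.re - w.re - b| := by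
  rw [dist_le_dist_iff_abs_re_sub_le (by simp only [UpperHalfPlane.vadd_im]),
    UpperHalfPlane.vadd_re, UpperHalfPlane.vadd_re, sub_sub, sub_sub, add_comm a, add_comm b]

theorem abs_sub_intCast_le_of_abs_sub_le_half {x : ℝ} {m : ℤ} (hm : |x - m| ≤ 1 / 2) (n : ℤ) :
    |x - m| ≤ |x - n| := by
  rcases eq_or_ne n m with rfl | hne
  · rfl
  · have one_le : (1 : ℝ) ≤ |(n : ℝ) - m| := by
      exact_mod_cast Int.one_le_abs (sub_ne_zero.mpr hne)
    have triangle : |(n : ℝ) - m| ≤ |n - x| + |x - m| := abs_sub_le _ _ _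
    rw [abs_sub_comm (n : ℝ) x] at triangle
    linarith

theorem bddBelow_range_dist_intCast_vadd (z w : ℍ) :
    BddBelow (Set.range fun n : ℤ => dist z ((n : ℝ) +ᵥ w)) :=
  ⟨0, Set.forall_mem_range.mpr fun _ => dist_nonneg⟩

theorem iInf_dist_intCast_vadd_eq {z w : ℍ} {m : ℤ} (hm : |z.re - w.re - m| ≤ 1 / 2) :
    (⨅ n : ℤ, dist z ((n : ℝ) +ᵥ w)) = dist z ((m : ℝ) +ᵥ w) :=
  le_antisymm (ciInf_le (bddBelow_range_dist_intCast_vadd z w) m) <|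
    le_ciInf fun n =>
      dist_vadd_le_dist_vadd_iff.mpr (abs_sub_intCast_le_of_abs_sub_le_half hm n)

theorem abs_sub_intCast_le_half_of_abs_le_three_halves {x : ℝ} (hx : |x| ≤ 3 / 2) :
    |x - (-1 : ℤ)| ≤ 1 / 2 ∨ |x - (0 : ℤ)| ≤ 1 / 2 ∨ |x - (1 : ℤ)| ≤ 1 / 2 := by
  push_cast
  simp only [abs_le] at hx ⊢
  grind

theorem translation_geodesic_cover_three_general {z w : ℍ} (h : |z.re - w.re| ≤ 3 / 2) :
    (⨅ n : ℤ, dist z ((n : ℝ) +ᵥ w)) =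
      min (dist z ((-1 : ℝ) +ᵥ w))
        (min (dist z ((0 : ℝ) +ᵥ w)) (dist z ((1 : ℝ) +ᵥ w))) := by
  have iInf_le_dist (n : ℤ) := ciInf_le (bddBelow_range_dist_intCast_vadd z w) n
  apply le_antisymm
  · refine le_min ?_ (le_min ?_ ?_)
    · simpa using iInf_le_dist (-1)
    · simpa using iInf_le_dist 0
    · simpa using iInf_le_dist 1
  · rcases abs_sub_intCast_le_half_of_abs_le_three_halves h with near | near | near <;>
      rw [iInf_dist_intCast_vadd_eq near] <;> simp

/-- For `z₁, z₂` in the strip fundamental domain `0 < Re z ≤ 1` of the group of integer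
translations, `inf_{n ∈ ℤ} d(z₁, z₂ + n) = min_{n ∈ {−1,0,1}} d(z₁, z₂ + n)`; in
particular, the geodesic-covering number of the translation group is at most `3`. -/
theorem translation_geodesic_cover_three (z₁ z₂ : ℍ)
    (h₁ : 0 < z₁.re) (h₁' : z₁.re ≤ 1) (h₂ : 0 < z₂.re) (h₂' : z₂.re ≤ 1) :
    (⨅ n : ℤ, dist z₁ ((n : ℝ) +ᵥ z₂)) =
      min (dist z₁ ((-1 : ℝ) +ᵥ z₂))
        (min (dist z₁ ((0 : ℝ) +ᵥ z₂)) (dist z₁ ((1 : ℝ) +ᵥ z₂))) :=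
  translation_geodesic_cover_three_general (abs_le.mpr ⟨by linarith, by linarith⟩)

end
end
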